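/- arXiv:1702.02670 — 2 statements merged into one kernel-verified Lean document; each statement's English description precedes it below -/
import Mathlib

section
/- For every ε > 0 there exists N ≥ 2 such that for every integer n ≥ N, all D, a ≥ 2 and all clustered data satisfying the setup assumptions: whenever x_i and x_j are two distinct points lying in the same cluster, p(x_i,x_j) ≥ (1/e − ε)/a. -/
/-! The denominator of `p(xᵢ,xⱼ)` is at most `a + a / n`: the `a` points of the cluster of `xᵢ` contribute
at most `1` each, and the remaining points, at most `n * a` in number, contribute at most
`exp (-5 log n) ≤ n⁻²` each. The numerator is at least `1 / e` because a cluster has diameter at most `1`.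
Hence `p ≥ (1 / e) / (a (1 + 1 / n))`, and any `n ≥ 1 / ε` absorbs the factor `1 + 1 / n`. -/

open Finset

/-- SNE input affinity with scales σᵢ = 2^{-1/2}:
`p(xᵢ,xⱼ) = exp(-‖xᵢ-xⱼ‖²) / ∑_{ℓ≠i} exp(-‖xᵢ-x_ℓ‖²)`. -/
noncomputable def sneP {D k : ℕ} (x : Fin k → EuclideanSpace ℝ (Fin D)) (i j : Fin k) : ℝ :=
  Real.exp (-‖x i - x j‖ ^ 2) / ∑ ℓ ∈ Finset.univ.erase i, Real.exp (-‖x i - x ℓ‖ ^ 2)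

/-- SNE output affinity `q(ψᵢ,ψⱼ) = exp(-‖ψᵢ-ψⱼ‖²) / ∑_{ℓ≠i} exp(-‖ψᵢ-ψ_ℓ‖²)`. -/
noncomputable def sneQ {d k : ℕ} (ψ : Fin k → EuclideanSpace ℝ (Fin d)) (i j : Fin k) : ℝ :=
  Real.exp (-‖ψ i - ψ j‖ ^ 2) / ∑ ℓ ∈ Finset.univ.erase i, Real.exp (-‖ψ i - ψ ℓ‖ ^ 2)

/-- SNE loss `L(ψ) = -∑ᵢ ∑_{j≠i} p(xᵢ,xⱼ) log q(ψᵢ,ψⱼ)`. -/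
noncomputable def sneLoss {D d k : ℕ} (x : Fin k → EuclideanSpace ℝ (Fin D))
    (ψ : Fin k → EuclideanSpace ℝ (Fin d)) : ℝ :=
  -∑ i : Fin k, ∑ j ∈ Finset.univ.erase i, sneP x i j * Real.log (sneQ ψ i j)

/-- The number of indices ℓ with ψ_ℓ in the closed ball centered at ψᵢ of radius ‖ψⱼ-ψᵢ‖. -/
noncomputable def ballCount {d k : ℕ} (ψ : Fin k → EuclideanSpace ℝ (Fin d)) (i j : Fin k) : ℕ :=
  (Finset.univ.filter (fun ℓ => ‖ψ ℓ - ψ i‖ ≤ ‖ψ j - ψ i‖)).card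

/-- Quality of an embedding:
`Q(ψ) = (1/n) ∑ₘ (1/(a(a-1))) ∑_{(i,j) distinct in cluster m} log |ψ ∩ B(ψᵢ, ‖ψⱼ-ψᵢ‖)|`. -/
noncomputable def quality {d k : ℕ} (n a : ℕ) (cl : Fin k → Fin n)
    (ψ : Fin k → EuclideanSpace ℝ (Fin d)) : ℝ :=
  (1 / (n : ℝ)) * ∑ m : Fin n, (1 / ((a : ℝ) * ((a : ℝ) - 1))) *
    ∑ i ∈ Finset.univ.filter (fun i => cl i = m),
      ∑ j ∈ (Finset.univ.filter (fun j => cl j = m)).erase i,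
        Real.log (ballCount ψ i j)

/-- Generalized output affinity `q₂(ψᵢ,ψⱼ) = f(‖ψᵢ-ψⱼ‖) / ∑_{ℓ≠i} f(‖ψᵢ-ψ_ℓ‖)`. -/
noncomputable def genQ {d k : ℕ} (f : ℝ → ℝ) (ψ : Fin k → EuclideanSpace ℝ (Fin d))
    (i j : Fin k) : ℝ :=
  f ‖ψ i - ψ j‖ / ∑ ℓ ∈ Finset.univ.erase i, f ‖ψ i - ψ ℓ‖

/-- Generalized loss `L₂(ψ) = -∑ᵢ ∑_{j≠i} p(xᵢ,xⱼ) log q₂(ψᵢ,ψⱼ)`. -/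
noncomputable def genLoss {D d k : ℕ} (f : ℝ → ℝ) (x : Fin k → EuclideanSpace ℝ (Fin D))
    (ψ : Fin k → EuclideanSpace ℝ (Fin d)) : ℝ :=
  -∑ i : Fin k, ∑ j ∈ Finset.univ.erase i, sneP x i j * Real.log (genQ f ψ i j)

/-- The affinity normalizer is bounded by the cluster size up to a relative error `1 / n`.
The radius `√(2 log n)` is already enough here. -/
lemma sneP_denominator_le {D n a : ℕ} (hn : 0 < n) (x : Fin (n * a) → EuclideanSpace ℝ (Fin D))
    (cl : Fin (n * a) → Fin n) (i : Fin (n * a))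
    (hcard : (univ.filter (fun ℓ => cl ℓ = cl i)).card = a)
    (hsep : ∀ ℓ, cl i ≠ cl ℓ → 2 * Real.log n ≤ ‖x i - x ℓ‖ ^ 2) :
    ∑ ℓ ∈ univ.erase i, Real.exp (-‖x i - x ℓ‖ ^ 2) ≤ a + a / n := by
  have hn' : (0 : ℝ) < n := by exact_mod_cast hn
  have hexp : Real.exp (-(2 * Real.log n)) = ((n : ℝ) ^ 2)⁻¹ := by
    rw [Real.exp_neg, two_mul, Real.exp_add, Real.exp_log hn', sq]
  calc ∑ ℓ ∈ univ.erase i, Real.exp (-‖x i - x ℓ‖ ^ 2)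
      ≤ ∑ ℓ, Real.exp (-‖x i - x ℓ‖ ^ 2) :=
        sum_le_sum_of_subset_of_nonneg (erase_subset _ _) fun _ _ _ => (Real.exp_pos _).le
    _ ≤ ∑ ℓ, ((if cl ℓ = cl i then (1 : ℝ) else 0) + ((n : ℝ) ^ 2)⁻¹) := by
        refine sum_le_sum fun ℓ _ => ?_
        split_ifs with h
        · have h1 : Real.exp (-‖x i - x ℓ‖ ^ 2) ≤ 1 := Real.exp_le_one_iff.2 (by simp)
          have h2 : (0 : ℝ) ≤ ((n : ℝ) ^ 2)⁻¹ := by positivity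
          linarith
        · rw [zero_add, ← hexp]
          exact Real.exp_le_exp.2 (neg_le_neg (hsep ℓ (Ne.symm h)))
    _ = a + a / n := by
        rw [sum_add_distrib, sum_boole, hcard]
        simp only [sum_const, card_univ, Fintype.card_fin, nsmul_eq_mul]
        push_cast
        field_simp

/-- for every ε > 0 there is N ≥ 2 such that for every n ≥ N and all clustered
data, whenever xᵢ, xⱼ are distinct points of the same cluster, p(xᵢ,xⱼ) ≥ (1/e − ε)/a. -/
theorem sneP_lower_same_cluster_improved
    (ε : ℝ) (hε : 0 < ε) :
    ∃ N : ℕ, 2 ≤ N ∧ ∀ n : ℕ, N ≤ n →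
      ∀ (D a : ℕ), 0 < D → 2 ≤ a →
      ∀ (x : Fin (n * a) → EuclideanSpace ℝ (Fin D))
        (cl : Fin (n * a) → Fin n),
        (∀ m : Fin n, (Finset.univ.filter (fun i => cl i = m)).card = a) →
        (∀ i j : Fin (n * a), cl i = cl j → ‖x i - x j‖ ≤ 1) →
        (∀ i j : Fin (n * a), cl i ≠ cl j →
          Real.sqrt (5 * Real.log n) ≤ ‖x i - x j‖) →
        ∀ i j : Fin (n * a), i ≠ j → cl i = cl j →
          (1 / Real.exp 1 - ε) / a ≤ sneP x i j := by
  obtain ⟨M, hM⟩ := exists_nat_ge (1 / ε)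
  refine ⟨max 2 M, le_max_left _ _, ?_⟩
  intro n hn D a hD ha x cl hcard hdiam hsep i j hij hcl
  have hn2 : 2 ≤ n := (le_max_left _ _).trans hn
  have hn0 : (0 : ℝ) < n := by exact_mod_cast (by omega : 0 < n)
  have ha0 : (0 : ℝ) < a := by exact_mod_cast (by omega : 0 < a)
  have hMn : (M : ℝ) ≤ n := by exact_mod_cast (le_max_right _ _).trans hn
  have hinv : 1 / (n : ℝ) ≤ ε := by
    rw [div_le_iff₀ hn0]
    have := (div_le_iff₀ hε).1 (hM.trans hMn)
    linarith
  have hlog : 0 ≤ Real.log n := Real.log_natCast_nonneg n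
  have hS := sneP_denominator_le (by omega) x cl i (hcard (cl i)) fun ℓ hℓ => by
    have := Real.sqrt_le_iff.1 (hsep i ℓ hℓ)
    linarith [this.2]
  have hSpos : 0 < ∑ ℓ ∈ univ.erase i, Real.exp (-‖x i - x ℓ‖ ^ 2) :=
    sum_pos (fun _ _ => Real.exp_pos _) ⟨j, by simp [hij.symm]⟩
  have hnum : 1 / Real.exp 1 ≤ Real.exp (-‖x i - x j‖ ^ 2) := by
    rw [one_div, ← Real.exp_neg, Real.exp_le_exp]
    have := pow_le_one₀ (n := 2) (norm_nonneg _) (hdiam i j hcl)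
    linarith
  have hc1 : 1 / Real.exp 1 ≤ 1 := by
    rw [one_div, ← Real.exp_neg]
    exact Real.exp_le_one_iff.2 (by norm_num)
  unfold sneP
  rw [div_le_div_iff₀ ha0 hSpos]
  set c := 1 / Real.exp 1
  refine le_trans ?_ (mul_le_mul_of_nonneg_right hnum ha0.le)
  rcases le_total (c - ε) 0 with h | h
  · have hc0 : 0 ≤ c := by positivity
    exact (mul_nonpos_of_nonpos_of_nonneg h hSpos.le).trans (by positivity)
  · calc _ ≤ (c - ε) * (a + a / n) := mul_le_mul_of_nonneg_left hS h
      _ = a * (c - ε + (c - ε) * (1 / n)) := by ring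
      _ ≤ a * (c - ε + 1 * ε) := by gcongr; linarith
      _ = c * a := by ring
end

section
/- There exists A ≥ 2 such that for every integer a ≥ A there exists N ≥ 2 such that for every integer n ≥ N, all D, d and all clustered data satisfying the setup assumptions: any embedding ψ* attaining a global minimum of the SNE loss L over embeddings into ℝ^d satisfies Q(ψ*) ≤ 15·log(2a). -/
/-!
The SNE loss of any embedding controls its quality.  If the closed ball around `ψ i` through `ψ j`
contains `N ≥ 2` of the points, then all of them other than `ψ i` contribute at least
`exp (-‖ψ i - ψ j‖²)` to the denominator of `q i j`, so `q i j ≤ 1 / (N - 1) ≤ 2 / N` and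
`log N ≤ log 2 - log (q i j)` (`log_ballCount_le`).  Inside a cluster the input affinities are
almost uniform, `p i j ≥ 1 / (6 (a - 1))` (`sneP_lower`), hence averaging over all pairs inside
clusters gives `Q(ψ) ≤ log 2 + 6 L(ψ) / (n a)` (`quality_le`).

The minimal loss is bounded by that of an explicit embedding (`testEmb`): every cluster is
collapsed to one point, and these points are placed on a line with consecutive distances
`√(log n)`.  Each denominator of `q` is then at most `2 a`, while pairs from different clusters
are at squared distance at most `n² log n` and carry affinity at most `3 / ((a - 1) n⁵)`, so that
`L / (n a) ≤ log (2 a) + o(1)` (`sneLoss_testEmb_le`).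
-/


open Finset

lemma card_cluster_erase {n a : ℕ} {cl : Fin (n * a) → Fin n}
    (hcard : ∀ m : Fin n, (Finset.univ.filter (fun i => cl i = m)).card = a) (i : Fin (n * a)) :
    ((Finset.univ.filter (fun ℓ => cl ℓ = cl i)).erase i).card = a - 1 := by
  have h := Finset.card_erase_of_mem
    (show i ∈ Finset.univ.filter (fun ℓ => cl ℓ = cl i) by simp)
  have := hcard (cl i)
  omega

/-- Splitting a sum over `ℓ ≠ i` into the cluster of `i` and its complement. -/
lemma sum_erase_le_of_cluster {n a : ℕ} (cl : Fin (n * a) → Fin n)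
    (hcard : ∀ m : Fin n, (Finset.univ.filter (fun i => cl i = m)).card = a)
    (i : Fin (n * a)) (f : Fin (n * a) → ℝ) (u v : ℝ) (hv : 0 ≤ v)
    (hu' : ∀ ℓ, cl i = cl ℓ → f ℓ ≤ u) (hv' : ∀ ℓ, cl i ≠ cl ℓ → f ℓ ≤ v) :
    ∑ ℓ ∈ Finset.univ.erase i, f ℓ ≤ ((a : ℝ) - 1) * u + n * a * v := by
  have hin : ((Finset.univ.erase i).filter (fun ℓ => cl ℓ = cl i)).card = a - 1 := by
    rw [Finset.filter_erase, card_cluster_erase hcard i]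
  have ha : 1 ≤ a :=
    (Finset.card_pos.mpr ⟨i, by simp⟩ : 0 < _).trans_eq (hcard (cl i))
  have hout : ((Finset.univ.erase i).filter (fun ℓ => ¬ cl ℓ = cl i)).card ≤ n * a := by
    simpa using Finset.card_le_univ ((Finset.univ.erase i).filter (fun ℓ => ¬ cl ℓ = cl i))
  rw [← Finset.sum_filter_add_sum_filter_not _ (fun ℓ => cl ℓ = cl i)]
  refine add_le_add ?_ ?_
  · have := Finset.sum_le_card_nsmul
      ((Finset.univ.erase i).filter (fun ℓ => cl ℓ = cl i)) f u
      (fun ℓ hℓ => hu' ℓ (Finset.mem_filter.mp hℓ).2.symm)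
    rw [hin, nsmul_eq_mul, Nat.cast_sub ha, Nat.cast_one] at this
    exact this
  · have := Finset.sum_le_card_nsmul
      ((Finset.univ.erase i).filter (fun ℓ => ¬ cl ℓ = cl i)) f v
      (fun ℓ hℓ => hv' ℓ (fun h => (Finset.mem_filter.mp hℓ).2 h.symm))
    rw [nsmul_eq_mul] at this
    refine this.trans (mul_le_mul_of_nonneg_right ?_ hv)
    exact_mod_cast hout

lemma sneP_nonneg {D k : ℕ} (x : Fin k → EuclideanSpace ℝ (Fin D)) (i j : Fin k) :
    0 ≤ sneP x i j := by
  unfold sneP; positivity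

lemma sneQ_pos {D k : ℕ} (x : Fin k → EuclideanSpace ℝ (Fin D)) {i j : Fin k} (h : j ≠ i) :
    0 < sneQ x i j := by
  unfold sneQ
  exact div_pos (Real.exp_pos _)
    (Finset.sum_pos (fun _ _ => Real.exp_pos _) ⟨j, by simp [h]⟩)

lemma sneQ_le_one {D k : ℕ} (x : Fin k → EuclideanSpace ℝ (Fin D)) {i j : Fin k} (h : j ≠ i) :
    sneQ x i j ≤ 1 := by
  unfold sneQ
  refine div_le_one_of_le₀ ?_ (Finset.sum_nonneg fun _ _ => (Real.exp_pos _).le)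
  exact Finset.single_le_sum (f := fun ℓ => Real.exp (-‖x i - x ℓ‖ ^ 2))
    (fun _ _ => (Real.exp_pos _).le) (by simp [h])

lemma log_ballCount_le {d k : ℕ} (ψ : Fin k → EuclideanSpace ℝ (Fin d)) {i j : Fin k}
    (h : j ≠ i) : Real.log (ballCount ψ i j) ≤ Real.log 2 - Real.log (sneQ ψ i j) := by
  set S := Finset.univ.filter (fun ℓ => ‖ψ ℓ - ψ i‖ ≤ ‖ψ j - ψ i‖) with hS
  have hN : ballCount ψ i j = S.card := rfl
  have hi : i ∈ S := by simp [hS]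
  have hj : j ∈ S.erase i := by simp [hS, h]
  have hcard : (S.erase i).card + 1 = S.card := Finset.card_erase_add_one hi
  have hpos : 1 ≤ (S.erase i).card := Finset.card_pos.mpr ⟨j, hj⟩
  have hZ : ((S.erase i).card : ℝ) * Real.exp (-‖ψ i - ψ j‖ ^ 2) ≤
      ∑ ℓ ∈ Finset.univ.erase i, Real.exp (-‖ψ i - ψ ℓ‖ ^ 2) := by
    calc ((S.erase i).card : ℝ) * Real.exp (-‖ψ i - ψ j‖ ^ 2)
        ≤ ∑ ℓ ∈ S.erase i, Real.exp (-‖ψ i - ψ ℓ‖ ^ 2) := by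
          rw [← nsmul_eq_mul]
          refine Finset.card_nsmul_le_sum _ _ _ fun ℓ hℓ => ?_
          have h1 := (Finset.mem_filter.mp (Finset.mem_of_mem_erase hℓ)).2
          rw [norm_sub_rev (ψ ℓ), norm_sub_rev (ψ j)] at h1
          gcongr
      _ ≤ _ := Finset.sum_le_sum_of_subset_of_nonneg
          (Finset.erase_subset_erase _ (Finset.subset_univ _))
          (fun _ _ _ => (Real.exp_pos _).le)
  have hq := sneQ_pos ψ h
  have hN0 : (0 : ℝ) < S.card := by exact_mod_cast (by omega : 0 < S.card)
  have hqN : sneQ ψ i j * S.card ≤ 2 := by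
    have hZ0 : 0 < ∑ ℓ ∈ Finset.univ.erase i, Real.exp (-‖ψ i - ψ ℓ‖ ^ 2) :=
      Finset.sum_pos (fun _ _ => Real.exp_pos _) ⟨j, by simp [h]⟩
    have h1 : sneQ ψ i j * (S.erase i).card ≤ 1 := by
      unfold sneQ
      rw [div_mul_eq_mul_div, div_le_one hZ0, mul_comm]
      exact hZ
    have h2 : (S.card : ℝ) ≤ 2 * (S.erase i).card := by
      exact_mod_cast (by omega : S.card ≤ 2 * (S.erase i).card)
    nlinarith
  have := Real.log_le_log (mul_pos hq hN0) hqN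
  rw [Real.log_mul hq.ne' hN0.ne'] at this
  rw [hN]; linarith

lemma exp_neg_sq_le_one (r : ℝ) : Real.exp (-r ^ 2) ≤ 1 :=
  Real.exp_le_one_iff.mpr (by nlinarith)

lemma third_le_exp_neg_sq {r : ℝ} (h0 : 0 ≤ r) (h1 : r ≤ 1) : 1 / 3 ≤ Real.exp (-r ^ 2) := by
  have h2 : Real.exp (-1) ≤ Real.exp (-r ^ 2) := Real.exp_le_exp.mpr (by nlinarith)
  refine le_trans ?_ h2
  rw [Real.exp_neg, ← one_div]
  exact one_div_le_one_div_of_le (Real.exp_pos _) (by linarith [Real.exp_one_lt_d9])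

lemma exp_neg_sq_le_of_sep {n : ℕ} (hn : 1 ≤ n) {r : ℝ}
    (h : Real.sqrt (5 * Real.log n) ≤ r) : Real.exp (-r ^ 2) ≤ 1 / (n : ℝ) ^ 5 := by
  have hn0 : (0 : ℝ) < n := by exact_mod_cast hn
  have hr : 0 ≤ r := (Real.sqrt_nonneg _).trans h
  have h1 : 5 * Real.log n ≤ r ^ 2 := (Real.sqrt_le_left hr).mp h
  calc Real.exp (-r ^ 2) ≤ Real.exp (-Real.log ((n : ℝ) ^ 5)) := by
        rw [Real.log_pow]; push_cast
        exact Real.exp_le_exp.mpr (by linarith)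
    _ = _ := by rw [Real.exp_neg, Real.exp_log (by positivity), one_div]

section Clustered

variable {n a D : ℕ} {x : Fin (n * a) → EuclideanSpace ℝ (Fin D)} {cl : Fin (n * a) → Fin n}

lemma sneP_lower (hn : 2 ≤ n) (ha : 2 ≤ a)
    (hcard : ∀ m : Fin n, (Finset.univ.filter (fun i => cl i = m)).card = a)
    (hdiam : ∀ i j : Fin (n * a), cl i = cl j → ‖x i - x j‖ ≤ 1)
    (hsep : ∀ i j : Fin (n * a), cl i ≠ cl j → Real.sqrt (5 * Real.log n) ≤ ‖x i - x j‖)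
    {i j : Fin (n * a)} (hij : cl i = cl j) (hne : j ≠ i) :
    1 / (6 * ((a : ℝ) - 1)) ≤ sneP x i j := by
  have ha' : (2 : ℝ) ≤ a := by exact_mod_cast ha
  have hn' : (2 : ℝ) ≤ n := by exact_mod_cast hn
  have hZ := sum_erase_le_of_cluster cl hcard i (fun ℓ => Real.exp (-‖x i - x ℓ‖ ^ 2)) 1
    (1 / (n : ℝ) ^ 5) (by positivity) (fun ℓ _ => exp_neg_sq_le_one _)
    (fun ℓ hℓ => exp_neg_sq_le_of_sep (by omega) (hsep i ℓ hℓ))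
  have hZ0 : 0 < ∑ ℓ ∈ Finset.univ.erase i, Real.exp (-‖x i - x ℓ‖ ^ 2) :=
    Finset.sum_pos (fun _ _ => Real.exp_pos _) ⟨j, by simp [hne]⟩
  have hsmall : (n : ℝ) * a * (1 / (n : ℝ) ^ 5) ≤ a / 2 := by
    have : (n : ℝ) * a * (1 / (n : ℝ) ^ 5) = a / (n : ℝ) ^ 4 := by field_simp
    rw [this]
    have h4 : (2 : ℝ) ≤ (n : ℝ) ^ 4 := hn'.trans (le_self_pow₀ (by linarith) (by norm_num))
    gcongr
  have hZ2 : ∑ ℓ ∈ Finset.univ.erase i, Real.exp (-‖x i - x ℓ‖ ^ 2) ≤ 2 * ((a : ℝ) - 1) := by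
    linarith
  have h3 := third_le_exp_neg_sq (norm_nonneg _) (hdiam i j hij)
  unfold sneP
  calc 1 / (6 * ((a : ℝ) - 1)) = (1 / 3) / (2 * ((a : ℝ) - 1)) := by
        rw [div_div]; ring_nf
    _ ≤ _ := by gcongr

lemma sneP_upper_of_ne (hn : 2 ≤ n) (ha : 2 ≤ a)
    (hcard : ∀ m : Fin n, (Finset.univ.filter (fun i => cl i = m)).card = a)
    (hdiam : ∀ i j : Fin (n * a), cl i = cl j → ‖x i - x j‖ ≤ 1)
    (hsep : ∀ i j : Fin (n * a), cl i ≠ cl j → Real.sqrt (5 * Real.log n) ≤ ‖x i - x j‖)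
    {i j : Fin (n * a)} (hij : cl i ≠ cl j) :
    sneP x i j ≤ 3 / (((a : ℝ) - 1) * n ^ 5) := by
  have ha' : (2 : ℝ) ≤ a := by exact_mod_cast ha
  have hn' : (2 : ℝ) ≤ n := by exact_mod_cast hn
  have ha1 : (0 : ℝ) < (a : ℝ) - 1 := by linarith
  have hZ : ((a : ℝ) - 1) * (1 / 3) ≤
      ∑ ℓ ∈ Finset.univ.erase i, Real.exp (-‖x i - x ℓ‖ ^ 2) := by
    have hin : ((Finset.univ.filter (fun ℓ => cl ℓ = cl i)).erase i).card = a - 1 :=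
      card_cluster_erase hcard i
    have h1 := Finset.card_nsmul_le_sum ((Finset.univ.filter (fun ℓ => cl ℓ = cl i)).erase i)
      (fun ℓ => Real.exp (-‖x i - x ℓ‖ ^ 2)) (1 / 3) (fun ℓ hℓ =>
        third_le_exp_neg_sq (norm_nonneg _)
          (hdiam i ℓ (Finset.mem_filter.mp (Finset.mem_of_mem_erase hℓ)).2.symm))
    rw [hin, nsmul_eq_mul, Nat.cast_sub (by omega), Nat.cast_one] at h1
    exact h1.trans (Finset.sum_le_sum_of_subset_of_nonneg
      (Finset.erase_subset_erase _ (Finset.subset_univ _)) (fun _ _ _ => (Real.exp_pos _).le))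
  unfold sneP
  calc _ ≤ (1 / (n : ℝ) ^ 5) / (((a : ℝ) - 1) * (1 / 3)) := by
        gcongr
        exact exp_neg_sq_le_of_sep (by omega) (hsep i j hij)
    _ = _ := by field_simp

lemma quality_le {d : ℕ} (hn : 2 ≤ n) (ha : 2 ≤ a)
    (hcard : ∀ m : Fin n, (Finset.univ.filter (fun i => cl i = m)).card = a)
    (hdiam : ∀ i j : Fin (n * a), cl i = cl j → ‖x i - x j‖ ≤ 1)
    (hsep : ∀ i j : Fin (n * a), cl i ≠ cl j → Real.sqrt (5 * Real.log n) ≤ ‖x i - x j‖)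
    (ψ : Fin (n * a) → EuclideanSpace ℝ (Fin d)) :
    quality n a cl ψ ≤ Real.log 2 + 6 * (sneLoss x ψ / (n * a)) := by
  have ha' : (2 : ℝ) ≤ a := by exact_mod_cast ha
  have hn' : (2 : ℝ) ≤ n := by exact_mod_cast hn
  have ha1 : (0 : ℝ) < (a : ℝ) - 1 := by linarith
  -- the quality as one sum over all points
  have hq : quality n a cl ψ = 1 / (n * (a * ((a : ℝ) - 1))) *
      ∑ i, ∑ j ∈ (Finset.univ.filter (fun j => cl j = cl i)).erase i,
        Real.log (ballCount ψ i j) := by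
    unfold quality
    rw [← Finset.mul_sum, ← mul_assoc, one_div_mul_one_div]
    congr 1
    rw [← Finset.sum_fiberwise (s := Finset.univ) (g := cl)]
    refine Finset.sum_congr rfl fun m _ => Finset.sum_congr rfl fun i hi => ?_
    rw [(Finset.mem_filter.mp hi).2]
  have hrow : ∀ i, ∑ j ∈ (Finset.univ.filter (fun j => cl j = cl i)).erase i,
        Real.log (ballCount ψ i j) ≤ ((a : ℝ) - 1) * Real.log 2 + 6 * ((a : ℝ) - 1) *
          (-∑ j ∈ Finset.univ.erase i, sneP x i j * Real.log (sneQ ψ i j)) := by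
    intro i
    have hin : ((Finset.univ.filter (fun ℓ => cl ℓ = cl i)).erase i).card = a - 1 :=
      card_cluster_erase hcard i
    have hterm : ∀ j ∈ (Finset.univ.filter (fun j => cl j = cl i)).erase i,
        Real.log (ballCount ψ i j) ≤ Real.log 2 + 6 * ((a : ℝ) - 1) *
          (-(sneP x i j * Real.log (sneQ ψ i j))) := by
      intro j hj
      have hne := Finset.ne_of_mem_erase hj
      have hcl := (Finset.mem_filter.mp (Finset.mem_of_mem_erase hj)).2
      have hp := sneP_lower hn ha hcard hdiam hsep hcl.symm hne
      rw [div_le_iff₀ (by positivity)] at hp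
      have hl := Real.log_nonpos (sneQ_pos ψ hne).le (sneQ_le_one ψ hne)
      have hb := log_ballCount_le ψ hne
      nlinarith
    calc _ ≤ ∑ j ∈ (Finset.univ.filter (fun j => cl j = cl i)).erase i,
          (Real.log 2 + 6 * ((a : ℝ) - 1) * (-(sneP x i j * Real.log (sneQ ψ i j)))) :=
          Finset.sum_le_sum hterm
      _ = ((a : ℝ) - 1) * Real.log 2 + 6 * ((a : ℝ) - 1) *
          ∑ j ∈ (Finset.univ.filter (fun j => cl j = cl i)).erase i,
            (-(sneP x i j * Real.log (sneQ ψ i j))) := by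
          rw [Finset.sum_add_distrib, Finset.sum_const, hin, nsmul_eq_mul,
            Nat.cast_sub (by omega), Nat.cast_one, Finset.mul_sum]
      _ ≤ _ := by
          rw [← Finset.sum_neg_distrib]
          refine add_le_add le_rfl (mul_le_mul_of_nonneg_left ?_ (by positivity))
          -- the pairs from different clusters contribute nonnegatively to the loss
          refine Finset.sum_le_sum_of_subset_of_nonneg
            (Finset.erase_subset_erase _ (Finset.subset_univ _)) fun j hj _ => ?_
          have hne := Finset.ne_of_mem_erase hj
          have hl := Real.log_nonpos (sneQ_pos ψ hne).le (sneQ_le_one ψ hne)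
          nlinarith [sneP_nonneg x i j]
  have hsum := Finset.sum_le_sum (s := Finset.univ) fun i _ => hrow i
  rw [Finset.sum_add_distrib, Finset.sum_const, ← Finset.mul_sum, Finset.sum_neg_distrib,
    Finset.card_univ, Fintype.card_fin, nsmul_eq_mul] at hsum
  change _ ≤ _ + 6 * ((a : ℝ) - 1) * sneLoss x ψ at hsum
  rw [hq]
  calc _ ≤ 1 / (n * (a * ((a : ℝ) - 1))) * (((n * a : ℕ) : ℝ) * (((a : ℝ) - 1) * Real.log 2) +
        6 * ((a : ℝ) - 1) * sneLoss x ψ) := by gcongr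
    _ = _ := by push_cast; field_simp

/-- The comparison embedding: the `m`-th cluster is collapsed to the point `m √(log n)` on the
first coordinate axis. -/
noncomputable def testEmb {d : ℕ} (hd : 0 < d) (cl : Fin (n * a) → Fin n) :
    Fin (n * a) → EuclideanSpace ℝ (Fin d) :=
  fun i => EuclideanSpace.single ⟨0, hd⟩ (Real.sqrt (Real.log n) * (cl i : ℕ))

lemma testEmb_dist_sq {d : ℕ} (hd : 0 < d) (i j : Fin (n * a)) :
    ‖testEmb hd cl i - testEmb hd cl j‖ ^ 2 =
      Real.log n * (((cl i : ℕ) : ℝ) - ((cl j : ℕ) : ℝ)) ^ 2 := by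
  have hl : 0 ≤ Real.log n := Real.log_natCast_nonneg n
  have h : testEmb hd cl i - testEmb hd cl j = EuclideanSpace.single ⟨0, hd⟩
      (Real.sqrt (Real.log n) * (cl i : ℕ) - Real.sqrt (Real.log n) * (cl j : ℕ)) := by
    ext t
    by_cases ht : t = ⟨0, hd⟩ <;> simp [testEmb, ht]
  rw [h, EuclideanSpace.single, PiLp.norm_single, Real.norm_eq_abs, sq_abs, ← mul_sub, mul_pow,
    Real.sq_sqrt hl]

lemma one_le_cluster_sub_sq {i j : Fin (n * a)} (h : cl i ≠ cl j) :
    (1 : ℝ) ≤ (((cl i : ℕ) : ℝ) - ((cl j : ℕ) : ℝ)) ^ 2 := by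
  have h1 : ((cl i : ℕ) : ℤ) - ((cl j : ℕ) : ℤ) ≠ 0 := by
    intro h0
    exact h (Fin.ext (by omega))
  have h2 : (1 : ℤ) ≤ (((cl i : ℕ) : ℤ) - ((cl j : ℕ) : ℤ)) ^ 2 := by
    have := sq_pos_of_ne_zero h1
    omega
  exact_mod_cast h2

lemma cluster_sub_sq_le (i j : Fin (n * a)) :
    (((cl i : ℕ) : ℝ) - ((cl j : ℕ) : ℝ)) ^ 2 ≤ (n : ℝ) ^ 2 := by
  have h1 : ((cl i : ℕ) : ℝ) ≤ n := by exact_mod_cast (cl i).2.le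
  have h2 : ((cl j : ℕ) : ℝ) ≤ n := by exact_mod_cast (cl j).2.le
  have h3 : (0 : ℝ) ≤ ((cl i : ℕ) : ℝ) := by positivity
  have h4 : (0 : ℝ) ≤ ((cl j : ℕ) : ℝ) := by positivity
  exact sq_le_sq' (by linarith) (by linarith)

lemma sneLoss_testEmb_le {d : ℕ} (hd : 0 < d) (hn : 2 ≤ n) (ha : 2 ≤ a)
    (hcard : ∀ m : Fin n, (Finset.univ.filter (fun i => cl i = m)).card = a)
    (hdiam : ∀ i j : Fin (n * a), cl i = cl j → ‖x i - x j‖ ≤ 1)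
    (hsep : ∀ i j : Fin (n * a), cl i ≠ cl j → Real.sqrt (5 * Real.log n) ≤ ‖x i - x j‖) :
    sneLoss x (testEmb hd cl) / (n * a) ≤ Real.log (2 * a) + 6 / n := by
  have ha' : (2 : ℝ) ≤ a := by exact_mod_cast ha
  have hn' : (2 : ℝ) ≤ n := by exact_mod_cast hn
  have ha1 : (0 : ℝ) < (a : ℝ) - 1 := by linarith
  have hl : 0 ≤ Real.log n := Real.log_natCast_nonneg n
  set ψ := testEmb (d := d) hd cl with hψ
  have hrow : ∀ i, -∑ j ∈ Finset.univ.erase i, sneP x i j * Real.log (sneQ ψ i j) ≤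
      Real.log (2 * a) + 6 / n := by
    intro i
    have hne : (Finset.univ.erase i).Nonempty := by
      rw [← Finset.card_pos, Finset.card_erase_of_mem (Finset.mem_univ i), Finset.card_univ,
        Fintype.card_fin]
      have : 2 * 2 ≤ n * a := Nat.mul_le_mul hn ha
      omega
    have hZx : 0 < ∑ ℓ ∈ Finset.univ.erase i, Real.exp (-‖x i - x ℓ‖ ^ 2) :=
      Finset.sum_pos (fun _ _ => Real.exp_pos _) hne
    have hZ0 : 0 < ∑ ℓ ∈ Finset.univ.erase i, Real.exp (-‖ψ i - ψ ℓ‖ ^ 2) :=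
      Finset.sum_pos (fun _ _ => Real.exp_pos _) hne
    have hp1 : ∑ j ∈ Finset.univ.erase i, sneP x i j = 1 := by
      unfold sneP
      rw [← Finset.sum_div, div_self hZx.ne']
    have hZ : ∑ ℓ ∈ Finset.univ.erase i, Real.exp (-‖ψ i - ψ ℓ‖ ^ 2) ≤ 2 * a := by
      have h1 := sum_erase_le_of_cluster cl hcard i (fun ℓ => Real.exp (-‖ψ i - ψ ℓ‖ ^ 2)) 1
        (1 / (n : ℝ)) (by positivity) (fun ℓ _ => exp_neg_sq_le_one _) (fun ℓ hℓ => by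
          have h2 : Real.log n ≤ ‖ψ i - ψ ℓ‖ ^ 2 := by
            rw [hψ, testEmb_dist_sq hd]
            exact le_mul_of_one_le_right hl (one_le_cluster_sub_sq hℓ)
          calc Real.exp (-‖ψ i - ψ ℓ‖ ^ 2) ≤ Real.exp (-Real.log n) :=
                Real.exp_le_exp.mpr (by linarith)
            _ = 1 / (n : ℝ) := by rw [Real.exp_neg, Real.exp_log (by linarith), one_div])
      have h3 : (n : ℝ) * a * (1 / n) = a := by field_simp
      linarith
    have hcross : ∑ j ∈ Finset.univ.erase i, sneP x i j * ‖ψ i - ψ j‖ ^ 2 ≤ 6 / n := by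
      have h1 := sum_erase_le_of_cluster cl hcard i (fun j => sneP x i j * ‖ψ i - ψ j‖ ^ 2) 0
        (3 / (((a : ℝ) - 1) * n ^ 5) * (n * n ^ 2)) (by positivity)
        (fun j hj => by
          rw [hψ, testEmb_dist_sq hd, hj]; simp)
        (fun j hj => by
          rw [hψ, testEmb_dist_sq hd]
          have := sneP_upper_of_ne hn ha hcard hdiam hsep hj
          have := cluster_sub_sq_le (cl := cl) i j
          have : Real.log n ≤ n := Real.log_le_self (by linarith)
          gcongr)
      refine h1.trans ?_
      have h2 : ((a : ℝ) - 1) * 0 + n * a * (3 / (((a : ℝ) - 1) * n ^ 5) * (n * n ^ 2)) =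
          (3 * a / ((a : ℝ) - 1)) / n := by field_simp; ring
      rw [h2]
      gcongr
      rw [div_le_iff₀ ha1]; linarith
    calc -∑ j ∈ Finset.univ.erase i, sneP x i j * Real.log (sneQ ψ i j)
        = ∑ j ∈ Finset.univ.erase i, sneP x i j * ‖ψ i - ψ j‖ ^ 2 +
          (∑ j ∈ Finset.univ.erase i, sneP x i j) *
            Real.log (∑ ℓ ∈ Finset.univ.erase i, Real.exp (-‖ψ i - ψ ℓ‖ ^ 2)) := by
          rw [Finset.sum_mul, ← Finset.sum_add_distrib, ← Finset.sum_neg_distrib]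
          refine Finset.sum_congr rfl fun j _ => ?_
          rw [sneQ, Real.log_div (Real.exp_pos _).ne' hZ0.ne', Real.log_exp]
          ring
      _ ≤ 6 / n + 1 * Real.log (2 * a) := by
          rw [hp1]
          gcongr
      _ = _ := by ring
  rw [div_le_iff₀ (by positivity), sneLoss, ← Finset.sum_neg_distrib]
  calc _ ≤ ∑ i : Fin (n * a), (Real.log (2 * a) + 6 / (n : ℝ)) :=
        Finset.sum_le_sum fun i _ => hrow i
    _ = _ := by
        rw [Finset.sum_const, Finset.card_univ, Fintype.card_fin, nsmul_eq_mul]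
        push_cast; ring

end Clustered

/-- there is A ≥ 2 such that for every a ≥ A there is N ≥ 2 such that for every
n ≥ N and all clustered data, any global minimizer ψ* of the SNE loss satisfies
Q(ψ*) ≤ 15·log(2a). -/
theorem sne_embedding_guarantee_improved
    : ∃ A : ℕ, 2 ≤ A ∧ ∀ a : ℕ, A ≤ a →
      ∃ N : ℕ, 2 ≤ N ∧ ∀ n : ℕ, N ≤ n →
        ∀ (D d : ℕ), 0 < D → 0 < d →
        ∀ (x : Fin (n * a) → EuclideanSpace ℝ (Fin D))
          (cl : Fin (n * a) → Fin n),
          (∀ m : Fin n, (Finset.univ.filter (fun i => cl i = m)).card = a) →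
          (∀ i j : Fin (n * a), cl i = cl j → ‖x i - x j‖ ≤ 1) →
          (∀ i j : Fin (n * a), cl i ≠ cl j →
            Real.sqrt (5 * Real.log n) ≤ ‖x i - x j‖) →
          ∀ ψs : Fin (n * a) → EuclideanSpace ℝ (Fin d),
            (∀ ψ : Fin (n * a) → EuclideanSpace ℝ (Fin d),
              sneLoss x ψs ≤ sneLoss x ψ) →
            quality n a cl ψs ≤ 15 * Real.log (2 * a) := by
  refine ⟨2, le_rfl, fun a ha => ⟨100, by norm_num, ?_⟩⟩
  intro n hn D d _ hd x cl hcard hdiam hsep ψs hmin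
  have ha' : (2 : ℝ) ≤ a := by exact_mod_cast ha
  have hn' : (100 : ℝ) ≤ n := by exact_mod_cast hn
  have h1 := quality_le (by omega) ha hcard hdiam hsep ψs
  have h2 := sneLoss_testEmb_le hd (by omega) ha hcard hdiam hsep
  have h3 : sneLoss x ψs / (n * a) ≤ sneLoss x (testEmb hd cl) / (n * a) := by
    gcongr
    exact hmin _
  have h4 : 6 / (n : ℝ) ≤ 6 / 100 := by gcongr
  have h5 : Real.log 2 ≤ Real.log (2 * a) := Real.log_le_log (by norm_num) (by linarith)
  have h6 := Real.log_two_gt_d9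
  linarith
end
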